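/- For all natural numbers N and n, the cardinality Nat.card of the set of tuples t : Fin n → (Fin N → ℤ) such that for every i there exists j : Fin N with t i = Pi.single j 1 or t i = -(Pi.single j 1) and ∑ i, t i = 0, equals the cardinality Nat.card of the set of tuples k : Fin n → ℤ such that for every i one has k i ≠ 0 and |k i| ≤ N, and ∑ i, ((Int.sign (k i) : ℝ) * Real.exp ((k i).natAbs : ℝ)) = 0. -/

import Mathlib

/-!
Sending `±e_j` to `±(j + 1)` identifies the signed unit vectors of `ℤ^N` with the step labels, and
the total height of a path is then the image of `∑ i, t i` under the linear map sending the basis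
vector `e_j` to `exp (j + 1)`. This map is injective because the numbers `exp r`, `r ∈ ℤ`, are
linearly independent over `ℤ`. The latter is Hermite's argument: multiplying a nontrivial relation
by some `exp (-r)` gives it a nonzero integer constant term `a`. For large primes `p`, simultaneous
approximations `m * exp r ≈ p * g r` with `p ∤ m` turn the relation into an integer `m * a + p * b`
of absolute value less than `1`, hence zero, although `p` does not divide `m * a`.
-/

open Filter Polynomial Set
open scoped Nat Topology

section LinearIndependenceOfExp

lemma tendsto_pow_div_factorial_pred {𝕜 : Type*} [Field 𝕜] [LinearOrder 𝕜] [IsStrictOrderedRing 𝕜]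
    [TopologicalSpace 𝕜] [OrderTopology 𝕜] [FloorSemiring 𝕜] (K : 𝕜) :
    Tendsto (fun p : ℕ ↦ K ^ p / (p - 1)!) atTop (𝓝 0) := by
  rw [← tendsto_add_atTop_iff_nat 1]
  simpa only [Nat.add_sub_cancel, pow_succ', mul_div_assoc, mul_zero] using
    (FloorSemiring.tendsto_pow_div_factorial_atTop K).const_mul K

variable {ι : Type*} {s : Finset ι} {r : ι → ℤ}

lemma eventually_exists_int_approx_exp (hr : ∀ i ∈ s, r i ≠ 0) {ε : ℝ} (hε : 0 < ε) :
    ∀ᶠ p : ℕ in atTop, p.Prime → ∃ m : ℤ, ¬ (p : ℤ) ∣ m ∧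
      ∃ g : ι → ℤ, ∀ i ∈ s, |m * Real.exp (r i) - p * g i| < ε := by
  let f : ℤ[X] := ∏ i ∈ s, (X - C (r i))
  have hf_eval : f.eval 0 ≠ 0 := by
    simpa [f, eval_prod, Finset.prod_ne_zero_iff] using hr
  have hf_root (i) (hi : i ∈ s) : (r i : ℂ) ∈ f.aroots ℂ := by
    refine mem_aroots.2 ⟨ne_of_apply_ne (eval 0) (by simpa using hf_eval), ?_⟩
    rw [map_prod]
    exact Finset.prod_eq_zero hi (by simp)
  obtain ⟨K, hK⟩ := LindemannWeierstrass.exp_polynomial_approx f hf_eval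
  filter_upwards [eventually_gt_atTop (f.eval 0).natAbs,
    (tendsto_pow_div_factorial_pred K).eventually_lt_const hε] with p hp hpε hp_prime
  obtain ⟨m, hm, g, -, hg⟩ := hK p hp hp_prime
  refine ⟨m, hm, fun i ↦ g.eval (r i), fun i hi ↦ ?_⟩
  have haeval : aeval (r i : ℂ) g = (g.eval (r i) : ℤ) := by
    simpa using aeval_algebraMap_apply_eq_algebraMap_eval (A := ℂ) (r i) g
  calc |m * Real.exp (r i) - p * g.eval (r i)|
      = ‖m • Complex.exp (r i) - p • aeval (r i : ℂ) g‖ := by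
        rw [haeval, ← Real.norm_eq_abs, ← Complex.norm_real]
        simp
    _ ≤ K ^ p / (p - 1)! := hg (hf_root i hi)
    _ < ε := hpε

lemma abs_sum_mul_lt_one {𝕜 : Type*} [Field 𝕜] [LinearOrder 𝕜] [IsStrictOrderedRing 𝕜] {c x : ι → 𝕜}
    (hx : ∀ i ∈ s, |x i| < (1 + ∑ i ∈ s, |c i|)⁻¹) : |∑ i ∈ s, c i * x i| < 1 := by
  have hA : 0 ≤ ∑ i ∈ s, |c i| := Finset.sum_nonneg fun _ _ ↦ abs_nonneg _
  calc |∑ i ∈ s, c i * x i|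
      ≤ ∑ i ∈ s, |c i| * |x i| := by
        simpa only [abs_mul] using Finset.abs_sum_le_sum_abs (fun i ↦ c i * x i) s
    _ ≤ ∑ i ∈ s, |c i| * (1 + ∑ i ∈ s, |c i|)⁻¹ := by
        gcongr with i hi
        exact (hx i hi).le
    _ = (∑ i ∈ s, |c i|) / (1 + ∑ i ∈ s, |c i|) := by rw [← Finset.sum_mul, div_eq_mul_inv]
    _ < 1 := by rw [div_lt_one (by linarith)]; linarith

lemma eq_zero_of_add_sum_mul_exp_eq_zero (hr : ∀ i ∈ s, r i ≠ 0) {a : ℤ} {c : ι → ℤ}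
    (h : (a : ℝ) + ∑ i ∈ s, c i * Real.exp (r i) = 0) : a = 0 := by
  have hε : 0 < (1 + ∑ i ∈ s, |(c i : ℝ)|)⁻¹ := by positivity
  obtain ⟨p, hp, happrox, hpa⟩ := (Nat.frequently_atTop_iff_infinite.2
    Nat.infinite_setOfPred_prime).and_eventually
      ((eventually_exists_int_approx_exp hr hε).and (eventually_gt_atTop a.natAbs)) |>.exists
  obtain ⟨m, hm, g, hg⟩ := happrox hp
  have hsum : ((m * a + p * ∑ i ∈ s, c i * g i : ℤ) : ℝ) =
      -∑ i ∈ s, c i * (m * Real.exp (r i) - p * g i) := by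
    have hexpand : ∑ i ∈ s, (c i : ℝ) * (m * Real.exp (r i) - p * g i) =
        m * ∑ i ∈ s, c i * Real.exp (r i) - p * ∑ i ∈ s, (c i : ℝ) * g i := by
      simp only [mul_sub, Finset.sum_sub_distrib, Finset.mul_sum, mul_left_comm]
    push_cast
    linear_combination (m : ℝ) * h + hexpand
  have hzero : m * a + p * ∑ i ∈ s, c i * g i = 0 := by
    rw [← Int.abs_lt_one_iff, ← Int.cast_lt (R := ℝ), Int.cast_abs, hsum, abs_neg, Int.cast_one]
    exact abs_sum_mul_lt_one hg
  have hdvd : (p : ℤ) ∣ m * a :=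
    (dvd_add_left (dvd_mul_right _ _)).1 (hzero ▸ dvd_zero _)
  have hpa_dvd : (p : ℤ) ∣ a := ((Nat.prime_iff_prime_int.1 hp).dvd_or_dvd hdvd).resolve_left hm
  exact Int.eq_zero_of_abs_lt_dvd hpa_dvd (by rw [Int.abs_eq_natAbs]; exact_mod_cast hpa)

theorem linearIndependent_exp_intCast : LinearIndependent ℤ fun r : ℤ ↦ Real.exp r := by
  refine linearIndependent_iff'.2 fun s c hc k hk ↦ ?_
  refine eq_zero_of_add_sum_mul_exp_eq_zero (s := s.erase k) (r := fun i ↦ i - k) (c := c)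
    (fun i hi ↦ sub_ne_zero.2 (Finset.ne_of_mem_erase hi)) ?_
  calc (c k : ℝ) + ∑ i ∈ s.erase k, c i * Real.exp ((i - k : ℤ) : ℝ)
      = ∑ i ∈ s, c i * Real.exp ((i - k : ℤ) : ℝ) := by
        simp [← Finset.add_sum_erase s _ hk]
    _ = (∑ i ∈ s, c i • Real.exp i) * Real.exp (-k) := by
        simp only [Finset.sum_mul, zsmul_eq_mul, mul_assoc, ← Real.exp_add, sub_eq_add_neg,
          Int.cast_add, Int.cast_neg]
    _ = 0 := by rw [hc, zero_mul]

lemma linearIndependent_exp_natCast : LinearIndependent ℤ fun k : ℕ ↦ Real.exp k := by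
  simpa only [Function.comp_def, Int.cast_natCast] using
    linearIndependent_exp_intCast.comp _ Nat.cast_injective

end LinearIndependenceOfExp

lemma bijOn_piMap {ι : Type*} {α β : ι → Type*} {f : ∀ i, α i → β i} {s : ∀ i, Set (α i)}
    {t : ∀ i, Set (β i)} (h : ∀ i, BijOn (f i) (s i) (t i)) :
    BijOn (Pi.map f) (univ.pi s) (univ.pi t) := by
  refine ⟨piMap_mapsTo_pi fun i _ ↦ (h i).mapsTo, fun x hx y hy hxy ↦ ?_, ?_⟩
  · exact funext fun i ↦ (h i).injOn (hx i trivial) (hy i trivial) (congrFun hxy i)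
  · rw [SurjOn, piMap_image_univ_pi]
    exact pi_mono fun i _ ↦ (h i).surjOn

lemma bijOn_sep {α β : Type*} {f : α → β} {s : Set α} {t : Set β} {p : α → Prop}
    {q : β → Prop} (h : BijOn f s t) (hpq : ∀ a ∈ s, p a ↔ q (f a)) :
    BijOn f {a ∈ s | p a} {b ∈ t | q b} := by
  refine ⟨fun a ha ↦ ⟨h.mapsTo ha.1, (hpq a ha.1).1 ha.2⟩, h.injOn.mono (sep_subset s p), ?_⟩
  rintro b ⟨hb, hqb⟩
  obtain ⟨a, ha, rfl⟩ := h.surjOn hb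
  exact ⟨a, ⟨ha, (hpq a ha).2 hqb⟩, rfl⟩

section SignedSteps

variable {N : ℕ}

/-- The `2 * N` signed standard basis vectors of `ℤ^N`, the steps of balanced tuples. -/
def signedUnits (N : ℕ) : Set (Fin N → ℤ) :=
  {v | ∃ j : Fin N, v = Pi.single j 1 ∨ v = -(Pi.single j 1)}

/-- The labels `±1, …, ±N` of the lattice path steps `l_{±k}`. -/
def stepLabels (N : ℕ) : Set ℤ :=
  {k | k ≠ 0 ∧ |k| ≤ (N : ℤ)}

/-- The linear map whose restriction to the signed unit vectors labels `±e_j` by `±(j + 1)`; the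
shift is there because `Fin N` starts at `0` and the labels start at `1`. -/
def stepLabel (N : ℕ) : (Fin N → ℤ) →ₗ[ℤ] ℤ :=
  Fintype.linearCombination ℤ fun j : Fin N ↦ (j : ℤ) + 1

@[simp]
lemma stepLabel_single (j : Fin N) : stepLabel N (Pi.single j 1) = j + 1 := by
  simp [stepLabel]

lemma mapsTo_stepLabel : MapsTo (stepLabel N) (signedUnits N) (stepLabels N) := by
  rintro _ ⟨j, rfl | rfl⟩ <;>
    simp only [stepLabels, mem_ofPred_eq, map_neg, stepLabel_single, abs_le] <;> omega

lemma injOn_stepLabel : InjOn (stepLabel N) (signedUnits N) := by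
  rintro _ ⟨i, rfl | rfl⟩ _ ⟨j, rfl | rfl⟩ h <;>
    simp only [map_neg, stepLabel_single] at h
  · rw [Fin.ext (by omega : (i : ℕ) = j)]
  · omega
  · omega
  · rw [Fin.ext (by omega : (i : ℕ) = j)]

lemma surjOn_stepLabel : SurjOn (stepLabel N) (signedUnits N) (stepLabels N) := by
  rintro k ⟨hk, hkN⟩
  rw [Int.abs_eq_natAbs] at hkN
  let j : Fin N := ⟨k.natAbs - 1, by omega⟩
  have hj : (j : ℤ) + 1 = |k| := by rw [Int.abs_eq_natAbs]; simp only [j]; omega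
  rcases hk.lt_or_gt with hneg | hpos
  · exact ⟨-Pi.single j 1, ⟨j, .inr rfl⟩, by
      rw [map_neg, stepLabel_single, hj, abs_of_neg hneg, neg_neg]⟩
  · exact ⟨Pi.single j 1, ⟨j, .inl rfl⟩, by rw [stepLabel_single, hj, abs_of_pos hpos]⟩

lemma bijOn_stepLabel : BijOn (stepLabel N) (signedUnits N) (stepLabels N) :=
  ⟨mapsTo_stepLabel, injOn_stepLabel, surjOn_stepLabel⟩

variable {M : Type*} [AddCommGroup M] {w : ℕ → M}

lemma linearCombination_eq_sign_smul_natAbs {v : Fin N → ℤ} (hv : v ∈ signedUnits N) :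
    Fintype.linearCombination ℤ (fun j : Fin N ↦ w (j + 1)) v =
      (stepLabel N v).sign • w (stepLabel N v).natAbs := by
  obtain ⟨j, hj⟩ := hv
  have hsign : ((j : ℤ) + 1).sign = 1 := Int.sign_eq_one_of_pos (by omega)
  have hnatAbs : ((j : ℤ) + 1).natAbs = j + 1 := by omega
  rcases hj with rfl | rfl
  · rw [Fintype.linearCombination_apply_single, stepLabel_single, hsign, hnatAbs]
  · rw [map_neg, Fintype.linearCombination_apply_single, map_neg, stepLabel_single, Int.sign_neg,
      Int.natAbs_neg, hsign, hnatAbs, neg_smul]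

variable {ι : Type*} [Fintype ι]

lemma sum_eq_zero_iff_sum_sign_smul_eq_zero
    (hw : LinearIndependent ℤ fun j : Fin N ↦ w (j + 1)) {t : ι → Fin N → ℤ}
    (ht : ∀ i, t i ∈ signedUnits N) :
    ∑ i, t i = 0 ↔
      ∑ i, (stepLabel N (t i)).sign • w (stepLabel N (t i)).natAbs = 0 := by
  simp_rw [← linearCombination_eq_sign_smul_natAbs (ht _), ← map_sum]
  exact (map_eq_zero_iff _ hw.fintypeLinearCombination_injective).symm

theorem card_balanced_tuples_eq_card_axis_lattice_paths_general
    (hw : LinearIndependent ℤ fun j : Fin N ↦ w (j + 1)) :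
    Nat.card {t : ι → (Fin N → ℤ) //
        (∀ i, ∃ j : Fin N, t i = Pi.single j 1 ∨ t i = -(Pi.single j 1)) ∧
        ∑ i, t i = 0} =
      Nat.card {k : ι → ℤ //
        (∀ i, k i ≠ 0 ∧ |k i| ≤ (N : ℤ)) ∧
        ∑ i, (k i).sign • w (k i).natAbs = 0} := by
  have hbij := bijOn_sep (p := fun t ↦ ∑ i, t i = 0)
    (q := fun k ↦ ∑ i, (k i).sign • w (k i).natAbs = 0)
    (bijOn_piMap fun _ : ι ↦ bijOn_stepLabel (N := N))
    fun t ht ↦ sum_eq_zero_iff_sum_sign_smul_eq_zero hw fun i ↦ ht i trivial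
  simpa only [signedUnits, stepLabels, mem_univ_pi, mem_ofPred_eq, coe_ofPred] using
    Nat.card_congr hbij.equiv

end SignedSteps

theorem card_balanced_tuples_eq_card_axis_lattice_paths (N n : ℕ) :
    Nat.card {t : Fin n → (Fin N → ℤ) //
        (∀ i, ∃ j : Fin N, t i = Pi.single j 1 ∨ t i = -(Pi.single j 1)) ∧
        ∑ i, t i = 0} =
      Nat.card {k : Fin n → ℤ //
        (∀ i, k i ≠ 0 ∧ |k i| ≤ (N : ℤ)) ∧
        ∑ i, ((Int.sign (k i) : ℝ) * Real.exp ((k i).natAbs : ℝ)) = 0} := by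
  have hexp := linearIndependent_exp_natCast.comp (fun j : Fin N ↦ (j + 1 : ℕ))
    ((add_left_injective 1).comp Fin.val_injective)
  simpa only [zsmul_eq_mul] using
    card_balanced_tuples_eq_card_axis_lattice_paths_general (w := fun k ↦ Real.exp k) hexp
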